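/- Let η ≥ 1, λ ≥ 0, and i ≤ η be integers, let G be a finite simple graph, let H ⊆ V(G), and let T ⊆ V(G) ∖ H. Let C₁, …, C_ℓ be pairwise disjoint subsets of V(G) ∖ (T ∪ H) with ℓ ≥ λ + η + 2 such that for every j ∈ [ℓ]: G[C_j] is connected, N_G(C_j) ∖ H = T, and td(G[C_j]) = i. Let M = C_{λ+η+2} ∪ ⋯ ∪ C_ℓ (the union of all but λ + η + 1 of the sets). Let S be an η-treedepth deletion set of G − M with H ⊆ S, and suppose that either T ⊆ S or |S ∩ (C₁ ∪ ⋯ ∪ C_{λ+η+1})| ≤ λ. Then S is an η-treedepth deletion set of G. -/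

import Mathlib

open SimpleGraph Set

variable {V : Type*}

/-- The connected component of `x` inside the induced subgraph `G[S]`, as a subset of `V`. -/
def compIn (G : SimpleGraph V) (S : Set V) (x : V) : Set V :=
  {y | ∃ (hx : x ∈ S) (hy : y ∈ S), (G.induce S).Reachable ⟨x, hx⟩ ⟨y, hy⟩}

/-- `tdLE G n S` means that the treedepth of the induced subgraph `G[S]` is at most `n`,
following the recursive definition of treedepth: a graph has treedepth at most `n+1`
iff from every connected component one can delete a vertex leaving a graph of
treedepth at most `n`; only the empty graph has treedepth at most `0`. -/
def tdLE (G : SimpleGraph V) : ℕ → Set V → Prop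
  | 0, S => S = ∅
  | n+1, S => ∀ x ∈ S, ∃ v ∈ compIn G S x, tdLE G n (compIn G S x \ {v})

/-- The treedepth of the induced subgraph `G[S]`. -/
noncomputable def td (G : SimpleGraph V) (S : Set V) : ℕ :=
  sInf {n | tdLE G n S}

/-- `N_G(C)`: the set of vertices outside `C` having a neighbor in `C`. -/
def nbhd (G : SimpleGraph V) (C : Set V) : Set V :=
  {v | v ∉ C ∧ ∃ u ∈ C, G.Adj u v}

/-- `C` is a connected component of the induced subgraph `G[R]`. -/
def IsCompOf (G : SimpleGraph V) (R C : Set V) : Prop :=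
  ∃ x ∈ R, C = compIn G R x

/-- `S` is an `η`-treedepth deletion set of `G`: `td(G − S) ≤ η`. -/
def IsTDS (G : SimpleGraph V) (η : ℕ) (S : Set V) : Prop :=
  td G Sᶜ ≤ η

/-- `S` is a connected `η`-treedepth deletion set of `G`. -/
def IsCTDS (G : SimpleGraph V) (η : ℕ) (S : Set V) : Prop :=
  IsTDS G η S ∧ S.Nonempty ∧ (G.induce S).Connected

/-- A rooted forest with vertex set `A ⊆ V`, given by its (reflexive) ancestor relation:
`anc u v` means `u` is an ancestor of `v` (every vertex being an ancestor of itself). -/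
structure RootedForest (V : Type*) (A : Set V) where
  anc : V → V → Prop
  mem_left : ∀ {u v}, anc u v → u ∈ A
  mem_right : ∀ {u v}, anc u v → v ∈ A
  refl : ∀ v ∈ A, anc v v
  trans : ∀ {u v w}, anc u v → anc v w → anc u w
  antisymm : ∀ {u v}, anc u v → anc v u → u = v
  chain : ∀ {u w v}, anc u v → anc w v → anc u w ∨ anc w u

/-- Depth of a rooted forest: the maximum number of vertices on a root-to-leaf path,
i.e. the maximum number of ancestors of a vertex. -/
noncomputable def RootedForest.depth [Fintype V] {A : Set V} (F : RootedForest V A) : ℕ :=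
  Finset.univ.sup fun v : V => {u | F.anc u v}.ncard

/-- `F` is a treedepth decomposition of `G[A]`: the endpoints of every edge of `G[A]`
are in ancestor-descendant relation in `F`. -/
def IsTDDecompOn (G : SimpleGraph V) (A : Set V) (F : RootedForest V A) : Prop :=
  ∀ u v, u ∈ A → v ∈ A → G.Adj u v → F.anc u v ∨ F.anc v u

/-- `A` is an `(x,y)`-vertex cut in `G`: `A` avoids `x` and `y` and there is
no path from `x` to `y` in `G − A`. -/
def IsVertexCut (G : SimpleGraph V) (x y : V) (A : Set V) : Prop :=
  ∃ (hx : x ∈ Aᶜ) (hy : y ∈ Aᶜ), ¬ (G.induce Aᶜ).Reachable ⟨x, hx⟩ ⟨y, hy⟩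

/-- The weight of a subgraph: the sum of the weights of its edges. -/
noncomputable def subWeight (w : Sym2 V → ℕ) {G : SimpleGraph V} (T : G.Subgraph) : ℕ :=
  ∑ᶠ e ∈ T.edgeSet, w e

/-- The leaves (vertices with exactly one neighbor) of a subgraph. -/
def subLeaves {G : SimpleGraph V} (T : G.Subgraph) : Set V :=
  {v | (T.neighborSet v).ncard = 1}

/-- `T` is a Steiner tree for the terminal set `R` in `G`. -/
def IsSteinerTree (G : SimpleGraph V) (R : Set V) (T : G.Subgraph) : Prop :=
  T.coe.IsTree ∧ R ⊆ T.verts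

/-- `T` is a `t`-component for `R`: a tree with at most `t` leaves, all of which lie in `R`. -/
def IsTComponent (G : SimpleGraph V) (R : Set V) (t : ℕ) (T : G.Subgraph) : Prop :=
  T.coe.IsTree ∧ (subLeaves T).ncard ≤ t ∧ subLeaves T ⊆ R

/-!
If `T ⊆ S`, the removed sets are components of `G - S` of treedepth `i ≤ η`. Otherwise let `R` be
what remains of `G - M` after deleting `S`. The bound `|S ∩ ⋃ C j| ≤ λ` leaves at least `η + 1` of
the `λ + η + 1` retained sets intact in `R`. If `M` has a neighbour `t` in `R`, then every intact
`C j` and every other neighbour of `M` in `R` lie in the component of `t`. Deleting the root of an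
optimal elimination of that component costs one level of treedepth and destroys at most one `C j`,
so the same situation recurs with `η - 1`. The recursion stops when `M` has no neighbours left: `M`
is then a union of components, and its treedepth `i` is at most that of an intact `C j ⊆ R`.
-/

section Counting

variable {ι : Type*} {J : Set ι} {C : ι → Set V} {S : Set V}

theorem encard_sep_not_disjoint_le (hC : J.PairwiseDisjoint C) :
    {j ∈ J | ¬ Disjoint (C j) S}.encard ≤ (S ∩ ⋃ j ∈ J, C j).encard := by
  have hmeet : ∀ j : {j ∈ J | ¬ Disjoint (C j) S}, ∃ y, y ∈ C j ∧ y ∈ S :=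
    fun j ↦ not_disjoint_iff.1 j.2.2
  choose f hfC hfS using hmeet
  have hf : Function.Injective f := fun a b hab ↦
    Subtype.ext <| hC.elim_set a.2.1 b.2.1 (f a) (hfC a) (hab ▸ hfC b)
  calc {j ∈ J | ¬ Disjoint (C j) S}.encard
      ≤ (range f).encard := hf.encard_range
    _ ≤ (S ∩ ⋃ j ∈ J, C j).encard := encard_le_encard <| range_subset_iff.2 fun j ↦
        ⟨hfS j, mem_biUnion j.2.1 (hfC j)⟩

theorem le_encard_sep_disjoint {n : ℕ∞} {k : ℕ} (hC : J.PairwiseDisjoint C)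
    (hJ : n + k ≤ J.encard) (hS : (S ∩ ⋃ j ∈ J, C j).encard ≤ k) :
    n ≤ {j ∈ J | Disjoint (C j) S}.encard := by
  refine (ENat.add_le_add_iff_right (ENat.natCast_ne_top k)).1 ?_
  calc n + k ≤ J.encard := hJ
    _ ≤ ({j ∈ J | Disjoint (C j) S} ∪ {j ∈ J | ¬ Disjoint (C j) S}).encard :=
        encard_le_encard fun j hj ↦ (em _).imp (⟨hj, ·⟩) (⟨hj, ·⟩)
    _ ≤ {j ∈ J | Disjoint (C j) S}.encard + {j ∈ J | ¬ Disjoint (C j) S}.encard :=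
        encard_union_le _ _
    _ ≤ {j ∈ J | Disjoint (C j) S}.encard + k := by
        gcongr
        exact (encard_sep_not_disjoint_le hC).trans hS

end Counting

section Components

variable {G : SimpleGraph V} {S A C : Set V} {x y z : V}

theorem compIn_subset : compIn G S x ⊆ S :=
  fun _ h ↦ h.2.1

theorem mem_compIn_self (hx : x ∈ S) : x ∈ compIn G S x :=
  ⟨hx, hx, .rfl⟩

theorem mem_compIn_of_adj (hy : y ∈ compIn G S x) (hz : z ∈ S) (hyz : G.Adj y z) :
    z ∈ compIn G S x := by
  obtain ⟨hx, hyS, hxy⟩ := hy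
  have hadj : (G.induce S).Adj ⟨y, hyS⟩ ⟨z, hz⟩ := hyz
  exact ⟨hx, hz, hxy.trans hadj.reachable⟩

theorem disjoint_nbhd_compIn : Disjoint (nbhd G (compIn G S x)) S :=
  disjoint_left.2 fun _ ⟨hy, _, hu, huy⟩ hyS ↦ hy (mem_compIn_of_adj hu hyS huy)

theorem compIn_mono (h : A ⊆ S) : compIn G A x ⊆ compIn G S x :=
  fun _ ⟨hx, hy, hxy⟩ ↦ ⟨h hx, h hy, hxy.map (G.induceHomOfLE h).toHom⟩

theorem compIn_subset_compIn (hx : x ∈ A) (hA : Disjoint (nbhd G A) S) :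
    compIn G S x ⊆ compIn G A x := by
  rintro y ⟨hxS, hyS, hxy⟩
  rw [reachable_iff_reflTransGen] at hxy
  suffices ∀ w : S, Relation.ReflTransGen (G.induce S).Adj ⟨x, hxS⟩ w → (w : V) ∈ compIn G A x from
    this _ hxy
  intro w hw
  induction hw with
  | refl => exact mem_compIn_self hx
  | @tail b c _ hbc hb =>
    have hcA : (c : V) ∈ A := by
      by_contra hc
      exact disjoint_left.1 hA ⟨hc, b, compIn_subset hb, hbc⟩ c.2
    exact mem_compIn_of_adj hb hcA hbc

theorem compIn_compIn (hx : x ∈ S) : compIn G (compIn G S x) x = compIn G S x :=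
  compIn_subset.antisymm (compIn_subset_compIn (mem_compIn_self hx) disjoint_nbhd_compIn)

theorem subset_compIn_of_connected (hC : (G.induce C).Connected) (hCS : C ⊆ S) (hx : x ∈ S)
    (hxC : x ∈ nbhd G C) : C ⊆ compIn G S x := by
  obtain ⟨_, u, hu, hux⟩ := hxC
  obtain ⟨_, _, hxu⟩ := mem_compIn_of_adj (mem_compIn_self hx) (hCS hu) hux.symm
  intro y hy
  have huy : (G.induce C).Reachable ⟨u, hu⟩ ⟨y, hy⟩ := hC.preconnected _ _
  exact ⟨hx, hCS hy, hxu.trans (huy.map (G.induceHomOfLE hCS).toHom)⟩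

theorem nbhd_biUnion_subset {ι : Type*} {L : Set ι} {C : ι → Set V} :
    nbhd G (⋃ j ∈ L, C j) ⊆ ⋃ j ∈ L, nbhd G (C j) := by
  rintro y ⟨hy, u, hu, huy⟩
  obtain ⟨j, hj, huj⟩ := mem_iUnion₂.1 hu
  exact mem_biUnion hj ⟨fun hyj ↦ hy (mem_biUnion hj hyj), u, huj, huy⟩

end Components

namespace tdLE

variable {G : SimpleGraph V} {m n : ℕ} {S A B : Set V} {v : V}

theorem mono (hS : tdLE G n S) (h : A ⊆ S) : tdLE G n A := by
  induction n generalizing S A with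
  | zero => exact subset_empty_iff.1 (h.trans_eq hS)
  | succ n ih =>
    intro x hx
    obtain ⟨v, -, hv⟩ := hS x (h hx)
    have hcomp : compIn G A x ⊆ compIn G S x := compIn_mono h
    by_cases hvx : v ∈ compIn G A x
    · exact ⟨v, hvx, ih hv (sdiff_subset_sdiff_left hcomp)⟩
    · exact ⟨x, mem_compIn_self hx,
        ih hv (sdiff_subset.trans (subset_sdiff_singleton hcomp hvx))⟩

theorem of_sdiff_singleton (h : tdLE G n (S \ {v})) : tdLE G (n + 1) S := by
  intro x hx
  by_cases hvx : v ∈ compIn G S x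
  · exact ⟨v, hvx, h.mono (sdiff_subset_sdiff_left compIn_subset)⟩
  · exact ⟨x, mem_compIn_self hx,
      h.mono (sdiff_subset.trans (subset_sdiff_singleton compIn_subset hvx))⟩

theorem of_le (h : tdLE G m S) (hmn : m ≤ n) : tdLE G n S := by
  induction hmn with
  | refl => exact h
  | step _ ih => exact fun x hx ↦
      ⟨x, mem_compIn_self hx, ih.mono (sdiff_subset.trans compIn_subset)⟩

theorem exists_of_finite (G : SimpleGraph V) (hS : S.Finite) : ∃ n, tdLE G n S := by
  induction S, hS using Set.Finite.induction_on with
  | empty => exact ⟨0, rfl⟩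
  | @insert a s _ _ ih =>
    obtain ⟨n, hn⟩ := ih
    exact ⟨n + 1, of_sdiff_singleton (v := a) (hn.mono (by simp))⟩

theorem of_forall_compIn (h : ∀ x ∈ S, tdLE G n (compIn G S x)) : tdLE G n S := by
  cases n with
  | zero => exact eq_empty_of_forall_notMem fun x hx ↦
      eq_empty_iff_forall_notMem.1 (h x hx) x (mem_compIn_self hx)
  | succ n =>
    intro x hx
    simpa only [compIn_compIn hx] using h x hx x (mem_compIn_self hx)

theorem of_forall_disjoint_nbhd
    (h : ∀ x ∈ S, ∃ A, x ∈ A ∧ Disjoint (nbhd G A) S ∧ tdLE G n A) : tdLE G n S :=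
  of_forall_compIn fun x hx ↦
    let ⟨_, hxA, hAS, hA⟩ := h x hx
    hA.mono ((compIn_subset_compIn hxA hAS).trans compIn_subset)

theorem biUnion {ι : Type*} {L : Set ι} {C : ι → Set V} (hC : ∀ j ∈ L, tdLE G n (C j))
    (hnb : ∀ j ∈ L, ∀ k ∈ L, Disjoint (nbhd G (C j)) (C k)) : tdLE G n (⋃ j ∈ L, C j) :=
  of_forall_disjoint_nbhd fun _ hx ↦
    let ⟨j, hj, hxj⟩ := mem_iUnion₂.1 hx
    ⟨C j, hxj, disjoint_iUnion₂_right.2 (hnb j hj), hC j hj⟩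

theorem union_of_disjoint_nbhd (hA : tdLE G n A) (hB : tdLE G n B)
    (hBA : Disjoint (nbhd G B) A) : tdLE G n (A ∪ B) := by
  refine of_forall_disjoint_nbhd fun x hx ↦ ?_
  by_cases hxB : x ∈ B
  · exact ⟨B, hxB, hBA.union_right (disjoint_left.2 fun _ hy ↦ hy.1), hB⟩
  · refine ⟨A \ B, ⟨hx.resolve_right hxB, hxB⟩, ?_, hA.mono sdiff_subset⟩
    refine disjoint_left.2 fun y ⟨hyAB, u, hu, huy⟩ hy ↦ ?_
    have hyB : y ∈ B := by grind
    exact disjoint_left.1 hBA ⟨hu.2, y, hyB, huy.symm⟩ hu.1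

theorem union_of_nbhd_subset {ι : Type*} {i : ℕ} {R M : Set V} {C : ι → Set V} {J : Set ι}
    (hR : tdLE G n R) (hM : tdLE G i M) (hJ : (n + 1 : ℕ) ≤ J.encard)
    (hdisj : J.PairwiseDisjoint C) (hCR : ∀ j ∈ J, C j ⊆ R)
    (hconn : ∀ j ∈ J, (G.induce (C j)).Connected) (hC : ∀ j ∈ J, ∀ k, tdLE G k (C j) → i ≤ k)
    (hnb : ∀ j ∈ J, nbhd G M ∩ R ⊆ nbhd G (C j)) : tdLE G n (R ∪ M) := by
  induction n generalizing R J with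
  | zero =>
    obtain ⟨j, hj⟩ := one_le_encard_iff_nonempty.1 (by simpa using hJ)
    obtain ⟨x, hx⟩ := (hconn j hj).nonempty
    exact absurd (hCR j hj hx) (eq_empty_iff_forall_notMem.1 hR x)
  | succ n ih =>
    obtain ⟨j₀, hj₀⟩ := one_le_encard_iff_nonempty.1 (le_trans (by simp) hJ)
    obtain hMR | ⟨t, htM, htR⟩ := (nbhd G M ∩ R).eq_empty_or_nonempty
    · have hin : i ≤ n + 1 := hC j₀ hj₀ _ (hR.mono (hCR j₀ hj₀))
      exact hR.union_of_disjoint_nbhd (hM.of_le hin) (disjoint_iff_inter_eq_empty.2 hMR)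
    obtain ⟨v, -, hv⟩ := hR t htR
    set K := compIn G R t
    have hCK : ∀ j ∈ J, C j ⊆ K := fun j hj ↦
      subset_compIn_of_connected (hconn j hj) (hCR j hj) htR (hnb j hj ⟨htM, htR⟩)
    have hMK : nbhd G M ∩ R ⊆ K := fun y hy ↦
      let ⟨_, u, hu, huy⟩ := hnb j₀ hj₀ hy
      mem_compIn_of_adj (hCK j₀ hj₀ hu) hy.2 huy
    have hsurvive : (n + 1 : ℕ) ≤ {j ∈ J | Disjoint (C j) {v}}.encard :=
      le_encard_sep_disjoint (k := 1) hdisj (mod_cast hJ)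
        ((encard_le_encard inter_subset_left).trans (by simp))
    have hKvM : tdLE G n (K \ {v} ∪ M) :=
      ih hv hsurvive (hdisj.subset fun _ hj ↦ hj.1)
        (fun j hj ↦ subset_sdiff.2 ⟨hCK j hj.1, hj.2⟩) (fun j hj ↦ hconn j hj.1)
        (fun j hj ↦ hC j hj.1) fun j hj y hy ↦ hnb j hj.1 ⟨hy.1, compIn_subset hy.2.1⟩
    have hKM : tdLE G (n + 1) (K ∪ M) := of_sdiff_singleton (v := v) (hKvM.mono (by grind))
    have hKMR : Disjoint (nbhd G (K ∪ M)) R := by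
      refine disjoint_left.2 fun y ⟨hy, u, hu, huy⟩ hyR ↦ hy (Or.inl ?_)
      obtain huK | huM := hu
      · exact mem_compIn_of_adj huK hyR huy
      · exact hMK ⟨⟨fun hyM ↦ hy (Or.inr hyM), u, huM, huy⟩, hyR⟩
    exact (hR.union_of_disjoint_nbhd hKM hKMR).mono (by grind)

theorem compl_of_compl_sdiff {ι : Type*} {η lam i : ℕ} {M : Set V} {C : ι → Set V} {J : Set ι}
    (hS : tdLE G η (Mᶜ \ S)) (hM : tdLE G i M) (hi : i ≤ η)
    (hJ : (lam + η + 1 : ℕ) ≤ J.encard) (hdisj : J.PairwiseDisjoint C)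
    (hCM : ∀ j ∈ J, Disjoint (C j) M) (hconn : ∀ j ∈ J, (G.induce (C j)).Connected)
    (hC : ∀ j ∈ J, ∀ k, tdLE G k (C j) → i ≤ k) (hnb : ∀ j ∈ J, nbhd G M \ S ⊆ nbhd G (C j))
    (hcond : nbhd G M ⊆ S ∨ (S ∩ ⋃ j ∈ J, C j).encard ≤ lam) : tdLE G η Sᶜ := by
  suffices tdLE G η (Mᶜ \ S ∪ M) from this.mono (by grind)
  obtain hMS | hlam := hcond
  · exact hS.union_of_disjoint_nbhd (hM.of_le hi) (disjoint_sdiff_right.mono_left hMS)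
  · have hsurvive : (η + 1 : ℕ) ≤ {j ∈ J | Disjoint (C j) S}.encard :=
      le_encard_sep_disjoint hdisj (le_trans (by norm_cast; omega) hJ) hlam
    exact hS.union_of_nbhd_subset hM hsurvive (hdisj.subset fun _ hj ↦ hj.1)
      (fun j hj ↦ subset_sdiff.2 ⟨(hCM j hj.1).subset_compl_right, hj.2⟩)
      (fun j hj ↦ hconn j hj.1) (fun j hj ↦ hC j hj.1) fun j hj y hy ↦ hnb j hj.1 ⟨hy.1, hy.2.2⟩

end tdLE

theorem isLeast_td [Finite V] (G : SimpleGraph V) (S : Set V) :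
    IsLeast {n | tdLE G n S} (td G S) :=
  ⟨Nat.sInf_mem (tdLE.exists_of_finite G S.toFinite), fun _ hn ↦ Nat.sInf_le hn⟩

theorem td_le_iff [Finite V] {G : SimpleGraph V} {S : Set V} {n : ℕ} :
    td G S ≤ n ↔ tdLE G n S :=
  ⟨fun h ↦ (isLeast_td G S).1.of_le h, fun h ↦ (isLeast_td G S).2 h⟩

-- `td` and `ncard` take the junk value `0` on unbounded treedepth and infinite sets, hence the
-- phrasing by `tdLE`, `IsLeast` and `encard`.
theorem stmt8_general {ι : Type*} {η lam i : ℕ} (hi : i ≤ η) {G : SimpleGraph V} {H T S : Set V}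
    {C : ι → Set V} {I J : Set ι} (hJI : J ⊆ I) (hJ : (lam + η + 1 : ℕ) ≤ J.encard)
    (hdisj : I.PairwiseDisjoint C) (hsub : ∀ j ∈ I, C j ⊆ (T ∪ H)ᶜ)
    (hconn : ∀ j ∈ J, (G.induce (C j)).Connected) (hnb : ∀ j ∈ I, nbhd G (C j) \ H = T)
    (htd : ∀ j ∈ I, IsLeast {n | tdLE G n (C j)} i)
    (hS : tdLE G η ((⋃ j ∈ I \ J, C j)ᶜ \ S)) (hHS : H ⊆ S)
    (hcond : T ⊆ S ∨ (S ∩ ⋃ j ∈ J, C j).encard ≤ lam) : tdLE G η Sᶜ := by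
  have hnbC : ∀ j ∈ I, nbhd G (C j) ⊆ T ∪ H := fun j hj ↦ by
    rw [← hnb j hj, sdiff_union_self]
    exact subset_union_left
  have hM : tdLE G i (⋃ j ∈ I \ J, C j) := tdLE.biUnion (fun j hj ↦ (htd j hj.1).1) fun j hj k hk ↦
    (disjoint_compl_right.mono_left (hnbC j hj.1)).mono_right (hsub k hk.1)
  have hnbM : nbhd G (⋃ j ∈ I \ J, C j) ⊆ T ∪ H :=
    nbhd_biUnion_subset.trans (iUnion₂_subset fun j hj ↦ hnbC j hj.1)
  refine hS.compl_of_compl_sdiff hM hi hJ (hdisj.subset hJI) ?_ hconn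
    (fun j hj _ hk ↦ (htd j (hJI hj)).2 hk) ?_
    (hcond.imp_left fun hTS ↦ hnbM.trans (union_subset hTS hHS))
  · exact fun j hj ↦ disjoint_iUnion₂_right.2 fun k hk ↦
      hdisj (hJI hj) hk.1 (ne_of_mem_of_not_mem hj hk.2)
  · intro j hj y ⟨hyM, hyS⟩
    have hyT : y ∈ T := (hnbM hyM).resolve_right fun hyH ↦ hyS (hHS hyH)
    rw [← hnb j (hJI hj)] at hyT
    exact hyT.1

/-- with `C 1, …, C ℓ` (`ℓ ≥ λ + η + 2`) pairwise disjoint connected sets of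
treedepth exactly `i ≤ η`, all avoiding `T ∪ H` and with `N_G(C j) ∖ H = T`, let `M` be
the union of all but the first `λ + η + 1` of them. If `S` is an `η`-treedepth deletion
set of `G − M` containing `H`, and either `T ⊆ S` or `S` meets `C 1 ∪ ⋯ ∪ C (λ+η+1)` in
at most `λ` vertices, then `S` is an `η`-treedepth deletion set of `G`. -/
theorem stmt8 {V : Type*} [Fintype V] (η lam i : ℕ) (hη : 1 ≤ η) (hi : i ≤ η)
    (G : SimpleGraph V) (H T : Set V) (hTH : T ⊆ Hᶜ)
    (ℓ : ℕ) (hℓ : lam + η + 2 ≤ ℓ) (C : ℕ → Set V)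
    (hdisj : ∀ j j', 1 ≤ j → j ≤ ℓ → 1 ≤ j' → j' ≤ ℓ → j ≠ j' → Disjoint (C j) (C j'))
    (hsub : ∀ j, 1 ≤ j → j ≤ ℓ → C j ⊆ (T ∪ H)ᶜ)
    (hconn : ∀ j, 1 ≤ j → j ≤ ℓ → (G.induce (C j)).Connected)
    (hnb : ∀ j, 1 ≤ j → j ≤ ℓ → nbhd G (C j) \ H = T)
    (htd : ∀ j, 1 ≤ j → j ≤ ℓ → td G (C j) = i)
    (S : Set V)
    (hSM : S ⊆ (⋃ j ∈ Set.Icc (lam + η + 2) ℓ, C j)ᶜ)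
    (hS : td G ((⋃ j ∈ Set.Icc (lam + η + 2) ℓ, C j)ᶜ \ S) ≤ η)
    (hHS : H ⊆ S)
    (hcond : T ⊆ S ∨ (S ∩ ⋃ j ∈ Set.Icc 1 (lam + η + 1), C j).ncard ≤ lam) :
    IsTDS G η S := by
  have hIJ : Icc 1 ℓ \ Icc 1 (lam + η + 1) = Icc (lam + η + 2) ℓ := by grind
  have hJ : (lam + η + 1 : ℕ) ≤ (Icc 1 (lam + η + 1)).encard := by simp [← Finset.coe_Icc]
  exact td_le_iff.2 <| stmt8_general hi (Icc_subset_Icc_right (by omega)) hJ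
    (fun j hj k hk ↦ hdisj j k hj.1 hj.2 hk.1 hk.2) (fun j hj ↦ hsub j hj.1 hj.2)
    (fun j hj ↦ hconn j hj.1 (hj.2.trans (by omega))) (fun j hj ↦ hnb j hj.1 hj.2)
    (fun j hj ↦ htd j hj.1 hj.2 ▸ isLeast_td G (C j)) (hIJ ▸ td_le_iff.1 hS) hHS
    (hcond.imp_right fun h ↦ encard_le_coe_iff_finite_ncard_le.2 ⟨toFinite _, h⟩)
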